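/- arXiv:1806.10183 — 4 statements merged into one kernel-verified Lean document; each statement's English description precedes it below -/
import Mathlib

section
/- Fundamental Theorem of Traditional Reversible Computing: Let C_I and C_F be finite types and let O : C_I → C_F be a function (a deterministic computational operation). If O is non-entropy-ejecting, i.e. for every probability distribution P on C_I one has H(O_* P) = H(P), then O is injective. Equivalently, if O is not injective, then there exists a probability distribution P on C_I (an operating context) for which the ejected entropy H(P) - H(O_* P) is strictly positive. -/
open Finset

/-- Shannon entropy (in nats) of a probability distribution on a finite type. -/
noncomputable def entropy {σ : Type*} [Fintype σ] (p : σ → ℝ) : ℝ :=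
  ∑ s, Real.negMulLog (p s)

/-- Pushforward of a distribution along a map between finite types. -/
noncomputable def pushforward {σ γ : Type*} [Fintype σ] [DecidableEq γ]
    (f : σ → γ) (p : σ → ℝ) : γ → ℝ :=
  fun c => ∑ s ∈ Finset.univ.filter (fun s => f s = c), p s

/-- Fundamental Theorem of Traditional Reversible Computing:
a deterministic computational operation that is non-entropy-ejecting in every
operating context must be (unconditionally logically) reversible, i.e.
injective. -/
theorem traditional_reversible_computing
    {CI CF : Type*} [Fintype CI] [Fintype CF] [DecidableEq CF]
    (O : CI → CF)
    (hne : ∀ P : CI → ℝ, (∀ c, 0 ≤ P c) → (∑ c, P c = 1) →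
      entropy (pushforward O P) = entropy P) :
    Function.Injective O := by
  classical
  intro a b hab
  by_contra hn
  let P : CI → ℝ := fun c => (if c = a then 1/2 else 0) + (if c = b then 1/2 else 0)
  have h0 : ∀ c, 0 ≤ P c := by
    intro c
    simp only [P]
    split_ifs <;> norm_num
  have h1 : ∀ c, P c ≤ 1 := by
    intro c
    simp only [P]
    split_ifs <;> norm_num
  have hs : ∑ c, P c = 1 := by
    simp only [P, Finset.sum_add_distrib, Finset.sum_ite_eq', Finset.mem_univ, if_true]
    norm_num
  have h := hne P h0 hs
  have hp : entropy (pushforward O P) = 0 := by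
    unfold entropy
    apply Finset.sum_eq_zero
    intro c _
    have : pushforward O P c = if O a = c then 1 else 0 := by
      simp only [pushforward, P, Finset.sum_add_distrib, Finset.sum_ite_eq',
        Finset.mem_filter, Finset.mem_univ, true_and, ← hab]
      split_ifs <;> norm_num
    rw [this]
    split_ifs <;> simp
  have hle : Real.negMulLog (P a) ≤ entropy P :=
    Finset.single_le_sum (f := fun c => Real.negMulLog (P c))
      (fun c _ => Real.negMulLog_nonneg (h0 c) (h1 c)) (Finset.mem_univ a)
  have hPa : P a = 1/2 := by simp [P, hn]
  have hlog : Real.log (1/2) < 0 := Real.log_neg (by norm_num) (by norm_num)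
  rw [hPa, ← h, hp, Real.negMulLog] at hle
  linarith
end

section
/- Fundamental Theorem of Generalized Reversible Computing, part (a): Let C_I and C_F be finite types, O : C_I → C_F a function, P a probability distribution on C_I, and A ⊆ C_I a subset on which O is injective. If the precondition A is satisfied with certainty, i.e. ∑_{c ∈ A} P c = 1, then the computation is non-entropy-ejecting: H(O_* P) = H(P). -/
open Finset

/-- Fundamental Theorem of Generalized Reversible Computing, part (a):
if some precondition `A` for reversibility of `O` is satisfied with certainty
in the operating context `P`, then the computation `(O, P)` is
non-entropy-ejecting. -/
theorem grc_part_a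
    {CI CF : Type*} [Fintype CI] [Fintype CF] [DecidableEq CF]
    (O : CI → CF) (P : CI → ℝ) (A : Finset CI)
    (hP : ∀ c, 0 ≤ P c) (hsum : ∑ c, P c = 1)
    (hinj : Set.InjOn O ↑A)
    (hcert : ∑ c ∈ A, P c = 1) :
    entropy (pushforward O P) = entropy P := by
  classical
  have h0 : ∀ c, c ∉ A → P c = 0 := by
    have h1 : ∑ c ∈ univ \ A, P c = 0 := by
      have := Finset.sum_sdiff (f := P) (Finset.subset_univ A)
      linarith
    intro c hc
    exact (Finset.sum_eq_zero_iff_of_nonneg (fun i _ => hP i)).1 h1 c (by simp [hc])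
  have hA : ∀ c ∈ A, pushforward O P (O c) = P c := by
    intro c hc
    unfold pushforward
    apply Finset.sum_eq_single_of_mem c (by simp)
    intro b hb hbc
    apply h0
    intro hbA
    exact hbc (hinj hbA hc (by simpa using hb))
  have e1 : ∑ s ∈ A, Real.negMulLog (P s) = ∑ s, Real.negMulLog (P s) :=
    Finset.sum_subset (Finset.subset_univ A) (fun c _ hc => by simp [h0 c hc])
  have e2 : ∑ d ∈ A.image O, Real.negMulLog (pushforward O P d)
      = ∑ d, Real.negMulLog (pushforward O P d) := by
    apply Finset.sum_subset (Finset.subset_univ _)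
    intro d _ hd
    have : pushforward O P d = 0 := by
      unfold pushforward
      apply Finset.sum_eq_zero
      intro b hb
      apply h0
      intro hbA
      exact hd (Finset.mem_image.2 ⟨b, hbA, by simpa using hb⟩)
    simp [this]
  unfold entropy
  rw [← e1, ← e2, Finset.sum_image hinj]
  exact Finset.sum_congr rfl (fun c hc => by rw [hA c hc])
end

section
/- Fundamental Theorem of Generalized Reversible Computing, part (b): Let C_I and C_F be finite types, O : C_I → C_F a function, and P a probability distribution on C_I. If there exist two distinct initial states c₁ ≠ c₂ with P c₁ > 0, P c₂ > 0, and O c₁ = O c₂ (equivalently, O is not injective on the support {c | P c > 0}, so no precondition for reversibility of O is satisfied with certainty), then the computation is entropy-ejecting: H(O_* P) < H(P). -/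
open Finset

/-- Fundamental Theorem of Generalized Reversible Computing, part (b):
if two distinct initial states of nonzero probability are merged by `O`,
then the computation `(O, P)` is entropy-ejecting. -/
theorem grc_part_b
    {CI CF : Type*} [Fintype CI] [Fintype CF] [DecidableEq CF]
    (O : CI → CF) (P : CI → ℝ)
    (hP : ∀ c, 0 ≤ P c) (hsum : ∑ c, P c = 1)
    (c₁ c₂ : CI) (hne : c₁ ≠ c₂)
    (h₁ : 0 < P c₁) (h₂ : 0 < P c₂) (hmerge : O c₁ = O c₂) :
    entropy (pushforward O P) < entropy P := by
  classical
  have hH : entropy (pushforward O P)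
      = ∑ s, -(P s) * Real.log (pushforward O P (O s)) := by
    unfold entropy
    rw [← Finset.sum_fiberwise (Finset.univ : Finset CI) O]
    refine Finset.sum_congr rfl fun c _ => ?_
    have h : ∑ s ∈ Finset.univ.filter (fun s => O s = c),
        -(P s) * Real.log (pushforward O P (O s))
        = ∑ s ∈ Finset.univ.filter (fun s => O s = c),
        -(P s) * Real.log (pushforward O P c) := by
      refine Finset.sum_congr rfl fun s hs => ?_
      rw [(Finset.mem_filter.1 hs).2]
    rw [h, ← Finset.sum_mul, Finset.sum_neg_distrib]
    rfl
  have hle : ∀ s, P s ≤ pushforward O P (O s) := fun s =>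
    Finset.single_le_sum (f := P) (fun i _ => hP i) (by simp)
  have hlt : P c₁ < pushforward O P (O c₁) :=
    Finset.single_lt_sum (f := P) hne.symm (by simp) (by simp [hmerge]) h₂
      (fun i _ _ => hP i)
  rw [hH]
  unfold entropy Real.negMulLog
  refine Finset.sum_lt_sum (fun s _ => ?_) ⟨c₁, Finset.mem_univ _, ?_⟩
  · rcases (hP s).eq_or_lt with h | h
    · simp [← h]
    · have := mul_le_mul_of_nonneg_left (Real.log_le_log h (hle s)) h.le
      linarith
  · have := mul_lt_mul_of_pos_left (Real.log_lt_log h₁ hlt) h₁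
    linarith
end

section
/- Entropy ejection vanishes as precondition certainty approaches unity: Let C_I and C_F be finite types, O : C_I → C_F a function, and A ⊆ C_I a subset on which O is injective. Let (P_n) be a sequence of probability distributions on C_I such that the total probability mass assigned to A tends to 1, i.e. ∑_{c ∈ A} P_n c → 1 as n → ∞. Then the entropy ejected tends to zero: H(P_n) - H(O_* P_n) → 0 as n → ∞. -/
open Finset Filter

theorem eject_zero_aux {CI CF : Type*} [Fintype CI] [Fintype CF] [DecidableEq CF]
    (O : CI → CF) (A : Finset CI) (hinj : Set.InjOn O ↑A) (q : CI → ℝ)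
    (hq : ∀ c, c ∉ A → q c = 0) : entropy q - entropy (pushforward O q) = 0 := by
  unfold entropy pushforward
  rw [sub_eq_zero, ← Finset.sum_fiberwise (s := Finset.univ) (g := O)]
  refine Finset.sum_congr rfl fun c _ => ?_
  by_cases h : ∃ a ∈ A, O a = c
  · obtain ⟨a, ha, rfl⟩ := h
    have h0 : ∀ b ∈ Finset.univ.filter (fun s => O s = O a), b ≠ a → q b = 0 := by
      intro b hb hne
      apply hq
      intro hbA
      exact hne (hinj hbA ha (Finset.mem_filter.1 hb).2)
    rw [Finset.sum_eq_single_of_mem a (by simp), Finset.sum_eq_single_of_mem a (by simp) h0]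
    intro b hb hne
    rw [h0 b hb hne, Real.negMulLog_zero]
  · have h0 : ∀ b ∈ Finset.univ.filter (fun s => O s = c), q b = 0 := by
      intro b hb
      apply hq
      intro hbA
      exact h ⟨b, hbA, (Finset.mem_filter.1 hb).2⟩
    rw [Finset.sum_eq_zero h0, Real.negMulLog_zero]
    refine Finset.sum_eq_zero fun b hb => ?_
    rw [h0 b hb, Real.negMulLog_zero]

/-- Entropy ejection vanishes as precondition certainty approaches unity:
if the probability mass that the operating contexts `P n` assign to a
precondition `A` for reversibility of `O` tends to 1, then the entropy
ejected tends to 0. -/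
theorem entropy_ejection_vanishes
    {CI CF : Type*} [Fintype CI] [Fintype CF] [DecidableEq CF]
    (O : CI → CF) (A : Finset CI) (hinj : Set.InjOn O ↑A)
    (P : ℕ → CI → ℝ)
    (hP : ∀ n c, 0 ≤ P n c) (hsum : ∀ n, ∑ c, P n c = 1)
    (hcert : Tendsto (fun n => ∑ c ∈ A, P n c) atTop (nhds 1)) :
    Tendsto (fun n => entropy (P n) - entropy (pushforward O (P n))) atTop (nhds 0) := by
  classical
  have hcont : Continuous (fun p : CI → ℝ => entropy p - entropy (pushforward O p)) := by
    unfold entropy pushforward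
    refine Continuous.sub ?_ ?_
    · exact continuous_finsetSum _ fun i _ => Real.continuous_negMulLog.comp (continuous_apply i)
    · exact continuous_finsetSum _ fun i _ => Real.continuous_negMulLog.comp
        (continuous_finsetSum _ fun j _ => continuous_apply j)
  have hK : IsCompact (Set.Icc (0 : CI → ℝ) 1) := isCompact_Icc
  have huc := Metric.uniformContinuousOn_iff.1
    (hK.uniformContinuousOn_of_continuous hcont.continuousOn)
  have hle : ∀ n c, P n c ≤ 1 := by
    intro n c
    rw [← hsum n]
    exact Finset.single_le_sum (fun i _ => hP n i) (Finset.mem_univ c)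
  rw [Metric.tendsto_atTop] at hcert ⊢
  intro ε hε
  obtain ⟨δ, hδ, H⟩ := huc ε hε
  obtain ⟨N, hN⟩ := hcert δ hδ
  refine ⟨N, fun n hn => ?_⟩
  have hNn := hN n hn
  have hz := eject_zero_aux O A hinj (fun c => if c ∈ A then P n c else 0)
    (fun c hc => by simp [hc])
  have := H (P n) ⟨fun c => hP n c, fun c => hle n c⟩ (fun c => if c ∈ A then P n c else 0)
    ⟨fun c => by
      by_cases hc : c ∈ A
      · simpa [hc] using hP n c
      · simp [hc],
     fun c => by
      by_cases hc : c ∈ A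
      · simpa [hc] using hle n c
      · simp [hc]⟩ ?_
  · simp only [hz] at this
    exact this
  · rw [dist_pi_lt_iff hδ]
    intro c
    by_cases hc : c ∈ A
    · simpa [hc] using hδ
    · simp only [hc, if_false, Real.dist_eq, sub_zero]
      rw [abs_of_nonneg (hP n c)]
      rw [Real.dist_eq] at hNn
      have h1 : P n c + ∑ x ∈ A, P n x ≤ 1 := by
        rw [← Finset.sum_insert hc, ← hsum n]
        exact Finset.sum_le_sum_of_subset_of_nonneg (Finset.subset_univ _) fun i _ _ => hP n i
      have h2 := (abs_lt.1 hNn).1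
      linarith
end
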